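/- arXiv:math/0407268 — 2 statements merged into one kernel-verified Lean document; each statement's English description precedes it below -/
import Mathlib

section
/- For every τ in the upper half-plane and all x, y ∈ ℂ, the Jacobi theta functions satisfy the product identity θ₃(x,τ)·θ₄(y,τ) = θ₄(x+y, 2τ)·θ₄(x−y, 2τ) − θ₁(x+y, 2τ)·θ₁(x−y, 2τ). -/
open Complex

/-- Jacobi theta function θ₁(z,τ), with nome `q = exp(iπτ)`. -/
noncomputable def theta1 (z τ : ℂ) : ℂ :=
  -I * ∑' n : ℤ, (-1 : ℂ) ^ n * Complex.exp ((Real.pi : ℂ) * I * τ * ((n : ℂ) + 1 / 2) ^ 2) *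
    Complex.exp (I * (2 * (n : ℂ) + 1) * z)

/-- Jacobi theta function θ₂(z,τ), with nome `q = exp(iπτ)`. -/
noncomputable def theta2 (z τ : ℂ) : ℂ :=
  ∑' n : ℤ, Complex.exp ((Real.pi : ℂ) * I * τ * ((n : ℂ) + 1 / 2) ^ 2) *
    Complex.exp (I * (2 * (n : ℂ) + 1) * z)

/-- Jacobi theta function θ₃(z,τ), with nome `q = exp(iπτ)`. -/
noncomputable def theta3 (z τ : ℂ) : ℂ :=
  ∑' n : ℤ, Complex.exp ((Real.pi : ℂ) * I * τ * (n : ℂ) ^ 2) *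
    Complex.exp (2 * I * (n : ℂ) * z)

/-- Jacobi theta function θ₄(z,τ), with nome `q = exp(iπτ)`. -/
noncomputable def theta4 (z τ : ℂ) : ℂ :=
  ∑' n : ℤ, (-1 : ℂ) ^ n * Complex.exp ((Real.pi : ℂ) * I * τ * (n : ℂ) ^ 2) *
    Complex.exp (2 * I * (n : ℂ) * z)

/-!
Up to sign and translations of the argument by `π / 2`, all theta functions here are values of the
theta function `θ[a]` with characteristic `a`, at `a = 0` or `a = 1 / 2`. In the double series for
`θ[a](x, τ) θ[b](y, τ)`, the index pairs `(n, m)` split by the parity of `n + m`: each is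
`(j + k + ε, j - k)` for unique `j`, `k` and `ε ∈ {0, 1}`. Since
`u² + v² = 2 ((u + v) / 2)² + 2 ((u - v) / 2)²`, each half factors as a product of two theta
functions at `2τ`, with arguments `x + y` and `x - y`. The identity is the case `a = b = 0`, with
`y + π / 2` in place of `y`.
-/

open scoped Real

lemma injective_add_add_sub (ε : ℤ) :
    Function.Injective fun p : ℤ × ℤ ↦ (p.1 + p.2 + ε, p.1 - p.2) := by
  rintro ⟨j, k⟩ ⟨j', k'⟩ h
  simp only [Prod.mk.injEq] at h ⊢
  lia

lemma isCompl_range_add_sub :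
    IsCompl (Set.range fun p : ℤ × ℤ ↦ (p.1 + p.2, p.1 - p.2))
      (Set.range fun p : ℤ × ℤ ↦ (p.1 + p.2 + 1, p.1 - p.2)) := by
  constructor
  · rw [Set.disjoint_iff_forall_ne]
    rintro _ ⟨⟨j, k⟩, rfl⟩ _ ⟨⟨j', k'⟩, rfl⟩ h
    simp only [Prod.mk.injEq] at h
    lia
  · rw [codisjoint_iff_le_sup]
    rintro ⟨n, m⟩ -
    rcases Int.even_or_odd' (n + m) with ⟨j, h | h⟩
    · exact Or.inl ⟨(j, n - j), Prod.ext (by lia) (by lia)⟩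
    · exact Or.inr ⟨(j, n - j - 1), Prod.ext (by lia) (by lia)⟩

lemma hasSum_of_parity_split {M : Type*} [AddCommMonoid M] [TopologicalSpace M] [ContinuousAdd M]
    {f : ℤ × ℤ → M} {s t : M} (hs : HasSum (fun p : ℤ × ℤ ↦ f (p.1 + p.2, p.1 - p.2)) s)
    (ht : HasSum (fun p : ℤ × ℤ ↦ f (p.1 + p.2 + 1, p.1 - p.2)) t) :
    HasSum f (s + t) := by
  have even_injective : Function.Injective fun p : ℤ × ℤ ↦ (p.1 + p.2, p.1 - p.2) := by
    simpa only [add_zero] using injective_add_add_sub 0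
  exact (even_injective.hasSum_range_iff.2 hs).add_isCompl
    isCompl_range_add_sub ((injective_add_add_sub 1).hasSum_range_iff.2 ht)

/-- The summand of index `n` in the series `thetaChar a z τ`. -/
noncomputable def thetaCharTerm (a : ℂ) (n : ℤ) (z τ : ℂ) : ℂ :=
  exp (π * I * τ * (n + a) ^ 2 + 2 * I * (n + a) * z)

/-- The theta function `θ[a](z, τ) = ∑ q ^ ((n + a)²) e ^ (2 i (n + a) z)` with characteristic `a`,
where `q = exp (iπτ)`. Only the shift of the summation index is recorded: the usual second
characteristic is a translation of `z`. -/
noncomputable def thetaChar (a z τ : ℂ) : ℂ :=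
  ∑' n : ℤ, thetaCharTerm a n z τ

lemma thetaCharTerm_eq_exp_mul_jacobiTheta₂_term (a : ℂ) (n : ℤ) (z τ : ℂ) :
    thetaCharTerm a n z τ =
      exp (π * I * τ * a ^ 2 + 2 * I * a * z) * jacobiTheta₂_term n (z / π + a * τ) τ := by
  have pi_ne_zero : (π : ℂ) ≠ 0 := ofReal_ne_zero.2 Real.pi_ne_zero
  rw [thetaCharTerm, jacobiTheta₂_term, ← exp_add]
  congr 1
  field_simp
  ring

lemma summable_thetaCharTerm (a z : ℂ) {τ : ℂ} (hτ : 0 < τ.im) :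
    Summable fun n : ℤ ↦ thetaCharTerm a n z τ := by
  simp only [thetaCharTerm_eq_exp_mul_jacobiTheta₂_term]
  exact ((summable_jacobiTheta₂_term_iff _ _).2 hτ).mul_left _

lemma hasSum_thetaCharTerm_mul (a b x y : ℂ) {τ : ℂ} (hτ : 0 < τ.im) :
    HasSum (fun p : ℤ × ℤ ↦ thetaCharTerm a p.1 x τ * thetaCharTerm b p.2 y τ)
      (thetaChar a x τ * thetaChar b y τ) := by
  have ha := (summable_thetaCharTerm a x hτ).norm
  have hb := (summable_thetaCharTerm b y hτ).norm
  rw [thetaChar, thetaChar, tsum_mul_tsum_of_summable_norm ha hb]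
  exact (summable_mul_of_summable_norm ha hb).hasSum

lemma thetaCharTerm_mul_thetaCharTerm (a b x y τ : ℂ) (ε j k : ℤ) :
    thetaCharTerm a (j + k + ε) x τ * thetaCharTerm b (j - k) y τ =
      thetaCharTerm ((a + b + ε) / 2) j (x + y) (2 * τ) *
        thetaCharTerm ((a - b + ε) / 2) k (x - y) (2 * τ) := by
  simp only [thetaCharTerm, ← exp_add]
  congr 1
  push_cast
  ring

theorem thetaChar_mul_thetaChar (a b x y : ℂ) {τ : ℂ} (hτ : 0 < τ.im) :
    thetaChar a x τ * thetaChar b y τ =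
      thetaChar ((a + b) / 2) (x + y) (2 * τ) * thetaChar ((a - b) / 2) (x - y) (2 * τ) +
        thetaChar ((a + b + 1) / 2) (x + y) (2 * τ) *
          thetaChar ((a - b + 1) / 2) (x - y) (2 * τ) := by
  have hτ₂ : 0 < (2 * τ).im := by simpa using hτ
  refine (hasSum_thetaCharTerm_mul a b x y hτ).unique (hasSum_of_parity_split ?_ ?_)
  · refine (hasSum_thetaCharTerm_mul _ _ _ _ hτ₂).congr_fun fun p ↦ ?_
    simpa using thetaCharTerm_mul_thetaCharTerm a b x y τ 0 p.1 p.2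
  · refine (hasSum_thetaCharTerm_mul _ _ _ _ hτ₂).congr_fun fun p ↦ ?_
    simpa using thetaCharTerm_mul_thetaCharTerm a b x y τ 1 p.1 p.2

lemma exp_int_mul_pi_mul_I (n : ℤ) : exp (n * (π * I)) = (-1) ^ n := by
  rw [exp_int_mul, exp_pi_mul_I]

lemma thetaCharTerm_add_pi (a : ℂ) (n : ℤ) (z τ : ℂ) :
    thetaCharTerm a n (z + π) τ = exp (2 * π * I * a) * thetaCharTerm a n z τ := by
  rw [← one_mul (exp (2 * π * I * a)), ← exp_int_mul_two_pi_mul_I n]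
  simp only [thetaCharTerm, ← exp_add]
  congr 1
  ring

lemma thetaChar_add_pi (a z τ : ℂ) :
    thetaChar a (z + π) τ = exp (2 * π * I * a) * thetaChar a z τ := by
  simp only [thetaChar, thetaCharTerm_add_pi, tsum_mul_left]

lemma theta3_eq_thetaChar (z τ : ℂ) : theta3 z τ = thetaChar 0 z τ := by
  simp only [theta3, thetaChar, thetaCharTerm, add_zero, exp_add]

lemma theta4_eq_thetaChar_add_pi_div_two (z τ : ℂ) :
    theta4 z τ = thetaChar 0 (z + π / 2) τ := by
  refine tsum_congr fun n ↦ ?_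
  rw [thetaCharTerm, ← exp_int_mul_pi_mul_I, ← exp_add, ← exp_add]
  congr 1
  ring

lemma theta4_eq_thetaChar_sub_pi_div_two (z τ : ℂ) :
    theta4 z τ = thetaChar 0 (z - π / 2) τ := by
  rw [theta4_eq_thetaChar_add_pi_div_two, show z + (π / 2 : ℂ) = z - π / 2 + π by ring,
    thetaChar_add_pi, mul_zero, exp_zero, one_mul]

lemma theta1_eq_neg_thetaChar_add_pi_div_two (z τ : ℂ) :
    theta1 z τ = -thetaChar (1 / 2) (z + π / 2) τ := by
  have I_mul_exp (w : ℂ) : I * exp w = exp (π / 2 * I + w) := by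
    rw [exp_add, exp_pi_div_two_mul_I]
  rw [theta1, neg_mul, neg_inj, ← tsum_mul_left]
  refine tsum_congr fun n ↦ ?_
  rw [thetaCharTerm, ← exp_int_mul_pi_mul_I, ← exp_add, ← exp_add, I_mul_exp]
  congr 1
  ring

lemma theta1_eq_thetaChar_sub_pi_div_two (z τ : ℂ) :
    theta1 z τ = thetaChar (1 / 2) (z - π / 2) τ := by
  rw [theta1_eq_neg_thetaChar_add_pi_div_two, show z + (π / 2 : ℂ) = z - π / 2 + π by ring,
    thetaChar_add_pi, show 2 * π * I * (1 / 2) = π * I by ring, exp_pi_mul_I, neg_one_mul, neg_neg]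

theorem theta_product_identity (τ : ℂ) (hτ : 0 < τ.im) (x y : ℂ) :
    theta3 x τ * theta4 y τ =
      theta4 (x + y) (2 * τ) * theta4 (x - y) (2 * τ) -
        theta1 (x + y) (2 * τ) * theta1 (x - y) (2 * τ) := by
  calc theta3 x τ * theta4 y τ
      = thetaChar 0 x τ * thetaChar 0 (y + π / 2) τ := by
        rw [theta3_eq_thetaChar, theta4_eq_thetaChar_add_pi_div_two]
    _ = thetaChar 0 (x + y + π / 2) (2 * τ) * thetaChar 0 (x - y - π / 2) (2 * τ) +
          thetaChar (1 / 2) (x + y + π / 2) (2 * τ) *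
            thetaChar (1 / 2) (x - y - π / 2) (2 * τ) := by
        simpa [add_assoc, sub_sub] using thetaChar_mul_thetaChar 0 0 x (y + π / 2) hτ
    _ = theta4 (x + y) (2 * τ) * theta4 (x - y) (2 * τ) -
          theta1 (x + y) (2 * τ) * theta1 (x - y) (2 * τ) := by
        rw [theta4_eq_thetaChar_add_pi_div_two (x + y), theta4_eq_thetaChar_sub_pi_div_two (x - y),
          theta1_eq_neg_thetaChar_add_pi_div_two (x + y),
          theta1_eq_thetaChar_sub_pi_div_two (x - y), neg_mul, sub_neg_eq_add]
end

section
/- Let p ≥ 1 and let l₁, …, l_p be nonzero linear forms l_k(x,y) = a_k·x + b_k·y on ℂ², pairwise linearly independent (a_j·b_k − a_k·b_j ≠ 0 for j ≠ k). For an entire (everywhere complex-analytic) function h : ℂ² → ℂ, define X_k h := b_k·(∂h/∂x) − a_k·(∂h/∂y) (the derivative of h along the constant vector field tangent to the level lines of l_k). Then X₁X₂⋯X_p h is identically zero on ℂ² if and only if there exist entire functions f₁, …, f_p : ℂ → ℂ such that h(x,y) = ∑_{k=1}^p f_k(l_k(x,y)) for all (x,y) ∈ ℂ². -/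
/-- The constant-coefficient first-order operator `X h = b ∂h/∂x - a ∂h/∂y`
associated with the linear form `l(x,y) = a x + b y` on `ℂ²`. -/
noncomputable def lineOp (a b : ℂ) (h : ℂ × ℂ → ℂ) : ℂ × ℂ → ℂ :=
  fun z => b * fderiv ℂ h z (1, 0) - a * fderiv ℂ h z (0, 1)

/-!
The operator `X` of the form `l(x, y) = a x + b y` is the derivative `D_v` along `v = (b, -a)`,
which spans the kernel of `l`. For any linear form `m`, `D_v (f ∘ m) = m v • (f' ∘ m)`, so `D_v`
maps sums `∑ f k ∘ l k` to such sums and kills the summands whose form vanishes at `v`; this gives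
one direction. Conversely, proceed by induction on the number of forms: if `D_v h = ∑ g k ∘ l k`
with `v` in the kernel of the last form and of no other, integrate each `g k` once and divide by
`l k v ≠ 0`. The difference between `h` and the resulting sum is killed by `D_v`, hence is a
function of the last form.
-/

open Set

section DirectionalDerivative

section NontriviallyNormedField

variable {𝕜 E F : Type*} [NontriviallyNormedField 𝕜] [NormedAddCommGroup E] [NormedSpace 𝕜 E]
  [NormedAddCommGroup F] [NormedSpace 𝕜 F]

lemma analyticOnNhd_fderiv_apply [CompleteSpace F] {h : E → F} {s : Set E}
    (hh : AnalyticOnNhd 𝕜 h s) (v : E) : AnalyticOnNhd 𝕜 (fun z => fderiv 𝕜 h z v) s :=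
  (ContinuousLinearMap.apply 𝕜 F v).comp_analyticOnNhd hh.fderiv

lemma fderiv_comp_continuousLinearMap_apply {f : 𝕜 → F} (l : E →L[𝕜] 𝕜) {z : E}
    (hf : DifferentiableAt 𝕜 f (l z)) (v : E) :
    fderiv 𝕜 (fun w => f (l w)) z v = l v • deriv f (l z) := by
  have hcomp : HasFDerivAt (fun w => f (l w)) _ z := hf.hasFDerivAt.comp z l.hasFDerivAt
  rw [hcomp.fderiv]
  simp

lemma fderiv_sum_comp_continuousLinearMap_apply {ι : Type*} [Fintype ι] {f : ι → 𝕜 → F}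
    (l : ι → E →L[𝕜] 𝕜) {z : E} (hf : ∀ k, DifferentiableAt 𝕜 (f k) (l k z)) (v : E) :
    fderiv 𝕜 (fun w => ∑ k, f k (l k w)) z v = ∑ k, l k v • deriv (f k) (l k z) := by
  have hcomp (k : ι) : DifferentiableAt 𝕜 (fun w => f k (l k w)) z :=
    DifferentiableAt.comp z (hf k) (l k).differentiableAt
  rw [fderiv_fun_sum fun k _ => hcomp k, sum_apply]
  simp only [fderiv_comp_continuousLinearMap_apply (l _) (hf _)]

end NontriviallyNormedField

variable {𝕜 E F : Type*} [RCLike 𝕜] [NormedAddCommGroup E] [NormedSpace 𝕜 E]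
  [NormedAddCommGroup F] [NormedSpace 𝕜 F]

lemma apply_add_eq_of_fderiv_apply_eq_zero {h : E → F} (hh : Differentiable 𝕜 h) {v : E}
    (hv : ∀ z, fderiv 𝕜 h z v = 0) (z : E) : h (z + v) = h z := by
  have hline (t : 𝕜) : HasDerivAt (fun s : 𝕜 => h (z + s • v)) 0 t := by
    have hpath : HasDerivAt (fun s : 𝕜 => z + s • v) v t := by
      simpa using ((hasDerivAt_id t).smul_const v).const_add z
    exact hv (z + t • v) ▸ (hh (z + t • v)).hasFDerivAt.comp_hasDerivAt t hpath
  simpa using is_const_of_deriv_eq_zero (fun t => (hline t).differentiableAt)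
    (fun t => (hline t).deriv) 1 0

lemma exists_differentiable_comp_eq_of_fderiv_apply_eq_zero {h : E → F}
    (hh : Differentiable 𝕜 h) {l : E →L[𝕜] 𝕜} (hl : l ≠ 0)
    (hker : ∀ w, l w = 0 → ∀ z, fderiv 𝕜 h z w = 0) :
    ∃ f : 𝕜 → F, Differentiable 𝕜 f ∧ ∀ z, h z = f (l z) := by
  obtain ⟨u, hu⟩ : ∃ u, l u = 1 :=
    LinearMap.surjective (f := (l : E →ₗ[𝕜] 𝕜)) (by exact_mod_cast hl) 1
  refine ⟨fun t => h (t • u), by fun_prop, fun z => ?_⟩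
  have hw : l (z - l z • u) = 0 := by simp [hu]
  simpa using apply_add_eq_of_fderiv_apply_eq_zero hh (hker _ hw) (l z • u)

end DirectionalDerivative

section RidgeSum

variable {E F ι : Type*} [NormedAddCommGroup E] [NormedSpace ℂ E]
  [NormedAddCommGroup F] [NormedSpace ℂ F] [Fintype ι]

/-- `h` is a sum of entire ridge functions with directions `l`, i.e. a sum of entire functions
`f k` of one variable, each evaluated at the linear form `l k`. These are the functions
characterized by the vanishing of an iterated directional derivative. -/
def IsRidgeSum (l : ι → E →L[ℂ] ℂ) (h : E → F) : Prop :=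
  ∃ f : ι → ℂ → F, (∀ k, AnalyticOnNhd ℂ (f k) univ) ∧ ∀ z, h z = ∑ k, f k (l k z)

namespace IsRidgeSum

lemma analyticOnNhd {l : ι → E →L[ℂ] ℂ} {h : E → F} (hh : IsRidgeSum l h) :
    AnalyticOnNhd ℂ h univ := by
  obtain ⟨f, hf, hsum⟩ := hh
  rw [funext hsum]
  exact Finset.analyticOnNhd_fun_sum _ fun k _ =>
    (hf k).comp ((l k).analyticOnNhd univ) (mapsTo_univ _ _)

end IsRidgeSum

lemma isRidgeSum_fin_succ_iff {n : ℕ} {l : Fin (n + 1) → E →L[ℂ] ℂ} {h : E → F} :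
    IsRidgeSum l h ↔ ∃ G f, IsRidgeSum (fun k : Fin n => l k.castSucc) G ∧
      AnalyticOnNhd ℂ f univ ∧ ∀ z, h z = G z + f (l (Fin.last n) z) := by
  constructor
  · rintro ⟨f, hf, hsum⟩
    exact ⟨_, f (Fin.last n), ⟨fun k => f k.castSucc, fun k => hf _, fun _ => rfl⟩, hf _,
      fun z => by rw [hsum, Fin.sum_univ_castSucc]⟩
  · rintro ⟨G, f, ⟨g, hg, hG⟩, hf, hsum⟩
    refine ⟨Fin.snoc (α := fun _ => ℂ → F) g f, fun k => ?_, fun z => ?_⟩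
    · cases k using Fin.lastCases with
      | last => simpa using hf
      | cast k => simpa using hg k
    · simp [hsum, hG, Fin.sum_univ_castSucc]

variable [CompleteSpace F]

namespace IsRidgeSum

lemma fderiv_apply {l : ι → E →L[ℂ] ℂ} {h : E → F} (hh : IsRidgeSum l h) (v : E) :
    IsRidgeSum l (fun z => fderiv ℂ h z v) := by
  obtain ⟨f, hf, hsum⟩ := hh
  refine ⟨fun k t => l k v • deriv (f k) t, fun k => analyticOnNhd_const.smul (hf k).deriv,
    fun z => ?_⟩
  rw [funext hsum]
  exact fderiv_sum_comp_continuousLinearMap_apply l (fun k => (hf k _ trivial).differentiableAt) v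

lemma exists_fderiv_apply_eq {l : ι → E →L[ℂ] ℂ} {v : E} (hv : ∀ k, l k v ≠ 0) {g : E → F}
    (hg : IsRidgeSum l g) : ∃ G, IsRidgeSum l G ∧ ∀ z, fderiv ℂ G z v = g z := by
  obtain ⟨f, hf, hsum⟩ := hg
  choose P hP using fun k =>
    (Complex.analyticOnNhd_univ_iff_differentiable.mp (hf k)).isExactOn_univ
  have hderiv (k : ι) (t : ℂ) :
      HasDerivAt (fun s => (l k v)⁻¹ • P k s) ((l k v)⁻¹ • f k t) t :=
    (hP k t trivial).const_smul _
  have hdiff (k : ι) : Differentiable ℂ (fun s => (l k v)⁻¹ • P k s) :=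
    fun t => (hderiv k t).differentiableAt
  refine ⟨_, ⟨_, fun k => Complex.analyticOnNhd_univ_iff_differentiable.mpr (hdiff k),
    fun _ => rfl⟩, fun z => ?_⟩
  rw [fderiv_sum_comp_continuousLinearMap_apply l fun k => hdiff k _, hsum]
  simp only [(hderiv _ _).deriv, smul_inv_smul₀ (hv _)]

end IsRidgeSum

lemma isRidgeSum_fderiv_apply_iff {n : ℕ} {l : Fin (n + 1) → E →L[ℂ] ℂ} {v : E}
    (hl : l (Fin.last n) ≠ 0) (hker : (l (Fin.last n)).ker = ℂ ∙ v)
    (hv : ∀ k : Fin n, l k.castSucc v ≠ 0) {h : E → F} (hh : Differentiable ℂ h) :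
    IsRidgeSum (fun k : Fin n => l k.castSucc) (fun z => fderiv ℂ h z v) ↔ IsRidgeSum l h := by
  rw [isRidgeSum_fin_succ_iff]
  constructor
  · intro hX
    obtain ⟨G, hG, hGv⟩ := hX.exists_fderiv_apply_eq hv
    have hG' (z : E) : DifferentiableAt ℂ G z := (hG.analyticOnNhd z trivial).differentiableAt
    have hkill (w : E) (hw : l (Fin.last n) w = 0) (z : E) : fderiv ℂ (h - G) z w = 0 := by
      obtain ⟨c, rfl⟩ : ∃ c : ℂ, c • v = w :=
        Submodule.mem_span_singleton.mp (hker ▸ LinearMap.mem_ker.mpr hw)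
      rw [fderiv_sub (hh z) (hG' z), map_smul, sub_apply, hGv, sub_self, smul_zero]
    obtain ⟨f, hf, hfac⟩ := exists_differentiable_comp_eq_of_fderiv_apply_eq_zero
      (fun z => (hh z).sub (hG' z)) hl hkill
    exact ⟨G, f, hG, Complex.analyticOnNhd_univ_iff_differentiable.mpr hf,
      fun z => sub_eq_iff_eq_add'.mp (hfac z)⟩
  · rintro ⟨G, f, hG, hf, hsum⟩
    have hf' := Complex.analyticOnNhd_univ_iff_differentiable.mp hf
    have hlv : l (Fin.last n) v = 0 := by
      simpa [← hker] using Submodule.mem_span_singleton_self (R := ℂ) v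
    convert hG.fderiv_apply v using 2 with z
    rw [funext hsum, fderiv_fun_add (hG.analyticOnNhd z trivial).differentiableAt (by fun_prop),
      add_apply, fderiv_comp_continuousLinearMap_apply _ (hf' _), hlv, zero_smul, add_zero]

theorem iterated_lineOp_eq_zero_iff_general (p : ℕ) (l : Fin p → E →L[ℂ] ℂ) (v : Fin p → E)
    (hl : ∀ k, l k ≠ 0) (hker : ∀ k, (l k).ker = ℂ ∙ v k) (hv : ∀ j k, j ≠ k → l j (v k) ≠ 0)
    (h : E → F) (hh : AnalyticOnNhd ℂ h univ) :
    (∀ z, (List.finRange p).foldr (fun k g z => fderiv ℂ g z (v k)) h z = 0) ↔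
      IsRidgeSum l h := by
  induction p generalizing h with
  | zero => simp [IsRidgeSum]
  | succ n ih =>
    rw [← isRidgeSum_fderiv_apply_iff (hl _) (hker _)
        (fun k => hv _ _ (Fin.castSucc_lt_last k).ne) fun z => (hh z trivial).differentiableAt,
      ← ih (fun k => l k.castSucc) (fun k => v k.castSucc) (fun k => hl _) (fun k => hker _)
        (fun j k hjk => hv _ _ ((Fin.castSucc_injective n).ne hjk)) _
        (analyticOnNhd_fderiv_apply hh _),
      List.finRange_succ_last, List.foldr_append, List.foldr_map]
    rfl

end RidgeSum

section LinearForm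

/-- The linear form `l(x, y) = a x + b y` on `𝕜²`, as a continuous linear map; over `ℂ` it is the
form that `lineOp a b` belongs to. -/
def linearForm {𝕜 : Type*} [NontriviallyNormedField 𝕜] (a b : 𝕜) : 𝕜 × 𝕜 →L[𝕜] 𝕜 :=
  a • ContinuousLinearMap.fst 𝕜 𝕜 𝕜 + b • ContinuousLinearMap.snd 𝕜 𝕜 𝕜

variable {𝕜 : Type*} [NontriviallyNormedField 𝕜] {a b : 𝕜}

@[simp]
lemma linearForm_apply (z : 𝕜 × 𝕜) : linearForm a b z = a * z.1 + b * z.2 := rfl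

lemma linearForm_apply_neg (c d : 𝕜) : linearForm a b (d, -c) = a * d - c * b := by
  rw [linearForm_apply]
  ring

lemma linearForm_ne_zero (hab : (a, b) ≠ (0, 0)) : linearForm a b ≠ 0 := by
  intro hzero
  have ha : a = 0 := by simpa using DFunLike.congr_fun hzero (1, 0)
  have hb : b = 0 := by simpa using DFunLike.congr_fun hzero (0, 1)
  exact hab (by rw [ha, hb])

lemma ker_linearForm (hab : (a, b) ≠ (0, 0)) : (linearForm a b).ker = 𝕜 ∙ (b, -a) := by
  ext ⟨x, y⟩
  rw [LinearMap.mem_ker, ContinuousLinearMap.coe_coe, Submodule.mem_span_singleton]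
  constructor
  · intro hxy
    rw [linearForm_apply] at hxy
    by_cases ha : a = 0
    · have hb : b ≠ 0 := fun hb => hab (by rw [ha, hb])
      have hy : y = 0 := by simpa [ha, hb] using hxy
      exact ⟨x / b, by simp [ha, hb, hy]⟩
    · refine ⟨-y / a, ?_⟩
      ext
      · simp only [Prod.smul_fst, smul_eq_mul]
        field_simp
        linear_combination -hxy
      · simp [ha]
  · rintro ⟨c, hc⟩
    rw [← hc, map_smul, linearForm_apply_neg, sub_self, smul_zero]

end LinearForm

lemma lineOp_eq_fderiv_apply (a b : ℂ) :
    lineOp a b = fun h z => fderiv ℂ h z (b, -a) := by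
  funext h z
  have hv : ((b, -a) : ℂ × ℂ) = b • (1, 0) - a • (0, 1) := by simp
  rw [hv, map_sub, map_smul, map_smul]
  rfl

/-- For pairwise independent linear forms `l₁, …, l_p` on `ℂ²` and an entire
function `h : ℂ² → ℂ`, one has `X₁X₂⋯X_p h ≡ 0` iff `h` is a sum of entire
functions of the individual forms: `h = ∑ₖ fₖ ∘ lₖ`. -/
theorem iterated_lineOp_eq_zero_iff (p : ℕ) (hp : 1 ≤ p) (a b : Fin p → ℂ)
    (hne : ∀ k, (a k, b k) ≠ (0, 0))
    (hind : ∀ j k, j ≠ k → a j * b k - a k * b j ≠ 0)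
    (h : ℂ × ℂ → ℂ) (hh : AnalyticOnNhd ℂ h Set.univ) :
    (∀ z : ℂ × ℂ, (List.finRange p).foldr (fun k g => lineOp (a k) (b k) g) h z = 0) ↔
      ∃ f : Fin p → ℂ → ℂ, (∀ k, AnalyticOnNhd ℂ (f k) Set.univ) ∧
        ∀ z : ℂ × ℂ, h z = ∑ k : Fin p, f k (a k * z.1 + b k * z.2) := by
  simp only [lineOp_eq_fderiv_apply]
  exact iterated_lineOp_eq_zero_iff_general p (fun k => linearForm (a k) (b k))
    (fun k => (b k, -a k)) (fun k => linearForm_ne_zero (hne k)) (fun k => ker_linearForm (hne k))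
    (fun j k hjk => linearForm_apply_neg (a k) (b k) ▸ hind j k hjk) h hh
end
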